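/- Let s, t ≥ 1 and n = s(2t+1). For i ∈ [2t+1], let P_i = { j ∈ [n] : j ≡ i (mod 2t+1) } (a set of size s), and let C_i be a set of bijections from [s] onto P_i such that any two distinct elements of C_i differ in at least 4t+1 positions. Let C ⊆ S_n be the interleaved code consisting of all permutations σ of [n] obtained by choosing σ_i ∈ C_i for each i ∈ [2t+1] and setting σ(j) = σ_i(⌈j/(2t+1)⌉) where i ≡ j (mod 2t+1). Then for all distinct σ, π ∈ C, the translocation distance satisfies d∘(σ,π) ≥ 2t+1; equivalently, the length of the longest common subsequence of any two distinct codewords is less than n − 2t. -/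

import Mathlib

/-- `IsMove l l'` holds if `l'` is obtained from `l` by a single translocation:
removing the element at position `i` and reinserting it at position `j`. -/
def IsMove {α : Type*} (l l' : List α) : Prop :=
  ∃ i j : Fin l.length, l' = (l.eraseIdx i).insertIdx j (l.get i)

/-- `ReachIn step m l l'` holds if `l'` can be obtained from `l` by `m` applications
of the relation `step`. -/
def ReachIn {α : Type*} (step : List α → List α → Prop) : ℕ → List α → List α → Prop
  | 0, l, l' => l = l'
  | m+1, l, l' => ∃ l'', step l l'' ∧ ReachIn step m l'' l'

/-- The one-line notation of a permutation of `Fin n`. -/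
def oneLine {n : ℕ} (σ : Equiv.Perm (Fin n)) : List (Fin n) := List.ofFn σ

/-- The translocation distance: the minimum number of translocations transforming
the one-line notation of `σ` into that of `π`. -/
noncomputable def translocDist {n : ℕ} (σ π : Equiv.Perm (Fin n)) : ℕ :=
  sInf {m | ReachIn IsMove m (oneLine σ) (oneLine π)}

theorem idx_erase {α : Type*} [DecidableEq α] (v : α) : ∀ (l : List α) (i : ℕ) (h : i < l.length),
    l[i] ≠ v → (l.eraseIdx i).idxOf v ≤ l.idxOf v ∧ l.idxOf v ≤ (l.eraseIdx i).idxOf v + 1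
  | [], i, h, _ => by simp at h
  | a :: l, 0, _, hv => by
      have hv' : a ≠ v := by simpa using hv
      simp [List.idxOf_cons_ne _ hv']
  | a :: l, i + 1, h, hv => by
      have ih := idx_erase v l i (by simpa using h) (by simpa using hv)
      by_cases hav : a = v
      · subst hav
        simp
      · simp only [List.eraseIdx_cons_succ, List.idxOf_cons_ne _ hav]
        omega

theorem idx_insert {α : Type*} [DecidableEq α] (v x : α) (hx : x ≠ v) : ∀ (l : List α) (j : ℕ),
    l.idxOf v ≤ (l.insertIdx j x).idxOf v ∧ (l.insertIdx j x).idxOf v ≤ l.idxOf v + 1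
  | l, 0 => by
      simp [List.idxOf_cons_ne _ hx]
  | [], j + 1 => by simp
  | a :: l, j + 1 => by
      have ih := idx_insert v x hx l j
      by_cases hav : a = v
      · subst hav
        simp
      · simp only [List.insertIdx_succ_cons, List.idxOf_cons_ne _ hav]
        omega

theorem reach_idx {α : Type*} [DecidableEq α] : ∀ (m : ℕ) (l l' : List α), ReachIn IsMove m l l' →
    ∃ D : Finset α, D.card ≤ m ∧ ∀ v, v ∉ D →
      l.idxOf v ≤ l'.idxOf v + m ∧ l'.idxOf v ≤ l.idxOf v + m
  | 0, l, l', h => ⟨∅, by simp, by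
      intro v _
      have h' : l = l' := h
      subst h'
      simp⟩
  | m + 1, l, l', h => by
      obtain ⟨l₂, ⟨i, j, hm⟩, h2⟩ := h
      obtain ⟨D, hD, hv⟩ := reach_idx m l₂ l' h2
      refine ⟨insert (l.get i) D, (Finset.card_insert_le _ _).trans (by omega), ?_⟩
      intro v hvD
      rw [Finset.mem_insert, not_or] at hvD
      have h3 := hv v hvD.2
      have hne : l.get i ≠ v := fun h => hvD.1 h.symm
      have h4 := idx_erase v l i i.isLt hne
      have h5 := idx_insert v (l.get i) hne (l.eraseIdx i) j
      rw [← hm] at h5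
      omega

theorem reach_trans {α : Type*} {r : List α → List α → Prop} (b : ℕ) (l₂ l₃ : List α)
    (h2 : ReachIn r b l₂ l₃) : ∀ (a : ℕ) (l₁ : List α), ReachIn r a l₁ l₂ → ∃ m, ReachIn r m l₁ l₃
  | 0, l₁, h => by
      have h' : l₁ = l₂ := h
      subst h'
      exact ⟨b, h2⟩
  | a + 1, l₁, h => by
      obtain ⟨l, hl, h⟩ := h
      obtain ⟨m, hm⟩ := reach_trans b l₂ l₃ h2 a l h
      exact ⟨m + 1, l, hl, hm⟩

theorem move_cons {α : Type*} (a : α) {l l' : List α} (h : IsMove l l') :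
    IsMove (a :: l) (a :: l') := by
  obtain ⟨i, j, h⟩ := h
  exact ⟨i.succ, j.succ, by simp [h]⟩

theorem reach_cons {α : Type*} (a : α) : ∀ (m : ℕ) (l l' : List α), ReachIn IsMove m l l' →
    ReachIn IsMove m (a :: l) (a :: l')
  | 0, l, l', h => congrArg (a :: ·) (show l = l' from h)
  | m + 1, l, l', h => by
      obtain ⟨l₂, h1, h2⟩ := h
      exact ⟨a :: l₂, move_cons a h1, reach_cons a m l₂ l' h2⟩

theorem reach_perm {α : Type*} {l l' : List α} (h : l.Perm l') : ∃ m, ReachIn IsMove m l l' := by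
  induction h with
  | nil => exact ⟨0, rfl⟩
  | cons a _ ih =>
    obtain ⟨m, hm⟩ := ih
    exact ⟨m, reach_cons a m _ _ hm⟩
  | swap x y l =>
    exact ⟨1, _, ⟨⟨0, by simp⟩, ⟨1, by simp⟩, by simp⟩, rfl⟩
  | trans _ _ h1 h2 =>
    obtain ⟨a, ha⟩ := h1
    obtain ⟨b, hb⟩ := h2
    exact reach_trans b _ _ hb a _ ha

theorem oneLine_nodup {n : ℕ} (σ : Equiv.Perm (Fin n)) : (oneLine σ).Nodup :=
  List.nodup_ofFn.2 σ.injective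

theorem oneLine_perm {n : ℕ} (σ π : Equiv.Perm (Fin n)) : (oneLine σ).Perm (oneLine π) := by
  rw [List.perm_ext_iff_of_nodup (oneLine_nodup σ) (oneLine_nodup π)]
  intro a
  simp only [oneLine, List.mem_ofFn]
  exact ⟨fun _ => π.surjective a, fun _ => σ.surjective a⟩

theorem oneLine_idx {n : ℕ} (σ : Equiv.Perm (Fin n)) (j : Fin n) :
    (oneLine σ).idxOf (σ j) = j := by
  have h := (oneLine_nodup σ).idxOf_getElem (j : ℕ) (by simp [oneLine])
  simpa [oneLine] using h

/-- Interleaving construction (Theorem: minimum distance of interleaved codes).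
Let `s, t ≥ 1` and `n = s(2t+1)`. Partition `[n]` into the residue classes
`P_i = { v : v ≡ i (mod 2t+1) }`, each of size `s`. For each class `i`, let `Cs i` be
a set of bijections from `[s]` onto `P_i` (injective maps with all values in class `i`)
any two distinct members of which differ in at least `4t+1` positions. If the
permutations `σ` and `π` are interleavings of codewords `fσ i ∈ Cs i` and
`fπ i ∈ Cs i` (the entry in position `j` comes from the component of class
`j mod (2t+1)`, in position `j div (2t+1)`), and `σ ≠ π`, then the translocation
distance between `σ` and `π` is at least `2t+1`. -/
theorem interleaved_min_translocDist (s t : ℕ) (hs : 1 ≤ s) (ht : 1 ≤ t)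
    (Cs : Fin (2 * t + 1) → Set (Fin s → Fin (s * (2 * t + 1))))
    (hmem : ∀ i, ∀ f ∈ Cs i,
      Function.Injective f ∧ ∀ k, ((f k : ℕ)) % (2 * t + 1) = (i : ℕ))
    (hdist : ∀ i, ∀ f ∈ Cs i, ∀ g ∈ Cs i, f ≠ g →
      4 * t + 1 ≤ (Finset.univ.filter fun k => f k ≠ g k).card)
    (σ π : Equiv.Perm (Fin (s * (2 * t + 1))))
    (fσ fπ : Fin (2 * t + 1) → Fin s → Fin (s * (2 * t + 1)))
    (hfσ : ∀ i, fσ i ∈ Cs i) (hfπ : ∀ i, fπ i ∈ Cs i)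
    (hσ : ∀ j : Fin (s * (2 * t + 1)),
      σ j = fσ ⟨(j : ℕ) % (2 * t + 1), Nat.mod_lt _ (by omega)⟩
              ⟨(j : ℕ) / (2 * t + 1),
                Nat.div_lt_of_lt_mul (lt_of_lt_of_eq j.isLt (Nat.mul_comm s (2 * t + 1)))⟩)
    (hπ : ∀ j : Fin (s * (2 * t + 1)),
      π j = fπ ⟨(j : ℕ) % (2 * t + 1), Nat.mod_lt _ (by omega)⟩
              ⟨(j : ℕ) / (2 * t + 1),
                Nat.div_lt_of_lt_mul (lt_of_lt_of_eq j.isLt (Nat.mul_comm s (2 * t + 1)))⟩)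
    (hne : σ ≠ π) :
    2 * t + 1 ≤ translocDist σ π := by
  have hreach : ReachIn IsMove (translocDist σ π) (oneLine σ) (oneLine π) :=
    Nat.sInf_mem (s := {m | ReachIn IsMove m (oneLine σ) (oneLine π)})
      (reach_perm (oneLine_perm σ π))
  by_contra hlt
  obtain ⟨D, hD, hv⟩ := reach_idx _ _ _ hreach
  have hfix : ∀ j, σ j ∉ D → σ j = π j := by
    intro j hj
    have h1 := hv _ hj
    obtain ⟨q, hq⟩ := π.surjective (σ j)
    have h2 := oneLine_idx π q
    rw [hq] at h2
    rw [oneLine_idx, h2] at h1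
    have h3 : ((σ j : ℕ)) % (2 * t + 1) = (j : ℕ) % (2 * t + 1) := by
      rw [hσ j]
      exact (hmem _ _ (hfσ _)).2 _
    have h4 : ((π q : ℕ)) % (2 * t + 1) = (q : ℕ) % (2 * t + 1) := by
      rw [hπ q]
      exact (hmem _ _ (hfπ _)).2 _
    rw [hq, h3] at h4
    have h5 : (j : ℕ) = q := by
      rcases le_total (j : ℕ) q with h | h
      · have := (Nat.modEq_iff_dvd' h).1 h4
        have := Nat.eq_zero_of_dvd_of_lt this (by omega)
        omega
      · have := (Nat.modEq_iff_dvd' h).1 h4.symm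
        have := Nat.eq_zero_of_dvd_of_lt this (by omega)
        omega
    have h6 : j = q := Fin.ext h5
    rw [← hq, h6]
  have hi : ∃ i, fσ i ≠ fπ i := by
    by_contra hall
    push Not at hall
    apply hne
    ext j
    rw [hσ, hπ, hall]
  obtain ⟨i, hi⟩ := hi
  have hcard := hdist i _ (hfσ i) _ (hfπ i) hi
  have hle : (Finset.univ.filter fun k => fσ i k ≠ fπ i k).card ≤ D.card := by
    refine Finset.card_le_card_of_injOn (fσ i) ?_ ((hmem i _ (hfσ i)).1.injOn)
    intro k hk
    have hk' : fσ i k ≠ fπ i k := by simpa using hk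
    by_contra hkD
    have hlt : (k : ℕ) * (2 * t + 1) + i < s * (2 * t + 1) := by
      have h1 : ((k : ℕ) + 1) * (2 * t + 1) ≤ s * (2 * t + 1) :=
        Nat.mul_le_mul_right _ k.isLt
      have h2 := i.isLt
      rw [Nat.succ_mul] at h1
      omega
    have hmod : ((k : ℕ) * (2 * t + 1) + i) % (2 * t + 1) = i := by
      rw [Nat.add_comm, Nat.add_mul_mod_self_right, Nat.mod_eq_of_lt i.isLt]
    have hdiv : ((k : ℕ) * (2 * t + 1) + i) / (2 * t + 1) = k := by
      rw [Nat.add_comm, Nat.add_mul_div_right _ _ (by omega), Nat.div_eq_of_lt i.isLt, zero_add]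
    have e1 := hσ ⟨_, hlt⟩
    have e2 := hπ ⟨_, hlt⟩
    simp only [hmod, hdiv, Fin.eta] at e1 e2
    apply hk'
    rw [← e1, ← e2]
    apply hfix
    rw [e1]
    exact hkD
  omega
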